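/- Let v > 0 and q ∈ ℝ with q ≤ v, let W be a d×d real symmetric positive definite matrix and R a d×d real symmetric matrix with W − R positive semidefinite, and let t ≥ 0. Set ξ = v⁻¹(R − q·v⁻¹·W), A(t) = v⁻¹W + tI, and ρ(t) = A(t)^{−1/2} ξ A(t)^{−1/2}. Then 3(v − q)·I − 2v·ρ(t) ⪰ (v − q)·I ⪰ 0 in the Loewner order; in particular 3(v − q)·I − 2v·ρ(t) is positive semidefinite. -/

import Mathlib

open Matrix
open scoped Classical

/-- `A^(-1/2)`: the inverse of the unique positive semidefinite square root of `A`
(junk value `0` if `A` is not positive semidefinite). -/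
noncomputable def invSqrt {d : ℕ} (A : Matrix (Fin d) (Fin d) ℝ) : Matrix (Fin d) (Fin d) ℝ :=
  if h : A.PosSemidef then (open scoped MatrixOrder in CFC.sqrt A)⁻¹ else 0

open scoped MatrixOrder in
lemma invSqrt_spec {d : ℕ} (A : Matrix (Fin d) (Fin d) ℝ) (hA : A.PosDef) :
    (invSqrt A).IsHermitian ∧ invSqrt A * A * invSqrt A = 1 := by
  have h := hA.posSemidef
  have hs : invSqrt A = (CFC.sqrt A)⁻¹ := by simp [invSqrt, h]
  have hmul : CFC.sqrt A * CFC.sqrt A = A := CFC.sqrt_mul_sqrt_self A h.nonneg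
  have hdet : IsUnit (CFC.sqrt A).det := by
    have h1 : IsUnit A.det := hA.det_pos.ne'.isUnit
    rw [← hmul, det_mul] at h1
    exact isUnit_of_mul_isUnit_left h1
  rw [hs]
  refine ⟨(CFC.sqrt_nonneg A).posSemidef.inv.1, ?_⟩
  generalize CFC.sqrt A = B at *
  rw [← hmul, ← mul_assoc, nonsing_inv_mul _ hdet, one_mul, mul_nonsing_inv _ hdet]

/-- With `ξ = v⁻¹(R - q v⁻¹ W)`, `A(t) = v⁻¹ W + t I`, `ρ(t) = A(t)^(-1/2) ξ A(t)^(-1/2)`,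
we have `3(v - q) I - 2v ρ(t) ⪰ (v - q) I ⪰ 0` in the Loewner order. -/
theorem three_v_sub_q_smul_one_sub_two_v_rho_posSemidef {d : ℕ} (v q t : ℝ)
    (W R : Matrix (Fin d) (Fin d) ℝ)
    (hv : 0 < v) (hq : q ≤ v) (hW : W.PosDef) (hR : R.IsSymm)
    (hWR : (W - R).PosSemidef) (ht : 0 ≤ t) :
    ((3 * (v - q)) • (1 : Matrix (Fin d) (Fin d) ℝ) -
        (2 * v) • (invSqrt (v⁻¹ • W + t • 1) * (v⁻¹ • (R - (q * v⁻¹) • W)) *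
          invSqrt (v⁻¹ • W + t • 1)) -
      (v - q) • (1 : Matrix (Fin d) (Fin d) ℝ)).PosSemidef ∧
    ((v - q) • (1 : Matrix (Fin d) (Fin d) ℝ)).PosSemidef := by
  have hvq : 0 ≤ v - q := sub_nonneg.2 hq
  refine ⟨?_, PosSemidef.one.smul hvq⟩
  have hA : (v⁻¹ • W + t • (1 : Matrix (Fin d) (Fin d) ℝ)).PosDef :=
    (hW.smul (inv_pos.2 hv)).add_posSemidef (PosSemidef.one.smul ht)
  obtain ⟨hS, hSA⟩ := invSqrt_spec _ hA
  generalize invSqrt (v⁻¹ • W + t • 1) = S at *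
  have key : (S * (W - R + ((v - q) * t) • (1 : Matrix (Fin d) (Fin d) ℝ)) * S).PosSemidef := by
    have := (hWR.add (PosSemidef.one.smul (mul_nonneg hvq ht))).mul_mul_conjTranspose_same S
    rwa [hS.eq] at this
  have k2 := key.smul (zero_le_two : (0:ℝ) ≤ 2)
  convert k2 using 1
  have e : W - R + ((v - q) * t) • (1 : Matrix (Fin d) (Fin d) ℝ)
      = (v - q) • (v⁻¹ • W + t • (1 : Matrix (Fin d) (Fin d) ℝ))
        - v • (v⁻¹ • (R - (q * v⁻¹) • W)) := by
    ext i j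
    simp only [Matrix.add_apply, Matrix.sub_apply, Matrix.smul_apply, smul_eq_mul]
    field_simp
    ring
  rw [e, Matrix.mul_sub S, Matrix.sub_mul (S * _), Matrix.mul_smul S (v - q), Matrix.smul_mul (v - q), hSA,
    Matrix.mul_smul S v, Matrix.smul_mul v]
  module
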